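/- The polynomial f_δ, regarded as a polynomial over ℚ, is irreducible of degree 16. -/

import Mathlib

open Polynomial in
/-- The degree-16 polynomial `f_δ`, regarded as a polynomial over ℚ. -/
noncomputable def fdeltaQ : Polynomial ℚ :=
  589824 * X ^ 16 - 7077888 * X ^ 15 + 41189376 * X ^ 14 - 154386432 * X ^ 13 +
    416788480 * X ^ 12 - 857112576 * X ^ 11 + 1383417856 * X ^ 10 - 1779354624 * X ^ 9 +
    1834437632 * X ^ 8 - 1514108928 * X ^ 7 + 992782336 * X ^ 6 - 509312064 * X ^ 5 +
    199354208 * X ^ 4 - 57160752 * X ^ 3 + 11200088 * X ^ 2 - 1313928 * X + 67417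

open Polynomial

theorem fdelta_prime_value : Nat.Prime 1260804727177 := by
  have hne : ∀ c : ℕ, 1 < c → c < 1260804727177 → ((c : ℕ) : ZMod 1260804727177) ≠ 1 := by
    intro c h1 h2 h
    have h3 : ((c : ℕ) : ZMod 1260804727177) = ((1 : ℕ) : ZMod 1260804727177) := by
      rw [h, Nat.cast_one]
    rw [ZMod.natCast_eq_natCast_iff'] at h3
    rw [Nat.mod_eq_of_lt h2, Nat.mod_eq_of_lt (by norm_num)] at h3
    omega
  have h59 : Nat.Prime 59226077 := by norm_num
  have h887 : Nat.Prime 887 := by norm_num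
  apply lucas_primality 1260804727177 (10 : ZMod 1260804727177)
  · norm_num only
    reduce_mod_char
  · intro q hq hd
    have hf : (1260804727177 - 1 : ℕ) = 2 ^ 3 * 3 * 887 * 59226077 := by norm_num
    have hq' : q = 2 ∨ q = 3 ∨ q = 887 ∨ q = 59226077 := by
      rw [hf, hq.dvd_mul, hq.dvd_mul, hq.dvd_mul] at hd
      rcases hd with ((hd | hd) | hd) | hd
      · exact Or.inl ((Nat.prime_dvd_prime_iff_eq hq Nat.prime_two).1 (hq.dvd_of_dvd_pow hd))
      · exact Or.inr (Or.inl ((Nat.prime_dvd_prime_iff_eq hq Nat.prime_three).1 hd))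
      · exact Or.inr (Or.inr (Or.inl ((Nat.prime_dvd_prime_iff_eq hq h887).1 hd)))
      · exact Or.inr (Or.inr (Or.inr ((Nat.prime_dvd_prime_iff_eq hq h59).1 hd)))
    rcases hq' with rfl | rfl | rfl | rfl
    all_goals
      norm_num only
      reduce_mod_char
      exact_mod_cast hne _ (by norm_num) (by norm_num)

/-- The integer polynomial `4 ^ 16 * f_δ ((t + 5) / 8)`; its constant term is a prime that
exceeds the sum of the absolute values of all the other coefficients. -/
noncomputable def fdeltaShift : ℤ[X] :=
  9 * X ^ 16 - 144 * X ^ 15 + 2424 * X ^ 14 - 28464 * X ^ 13 + 257020 * X ^ 12 -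
    1638288 * X ^ 11 + 7904584 * X ^ 10 - 33422768 * X ^ 9 + 56980982 * X ^ 8 +
    243305936 * X ^ 7 - 950450616 * X ^ 6 + 3023766512 * X ^ 5 - 31631365892 * X ^ 4 +
    119750500944 * X ^ 3 - 10747632008 * X ^ 2 - 765162899216 * X + 1260804727177

theorem fdeltaShift_coeff_zero : fdeltaShift.coeff 0 = 1260804727177 := by
  rw [coeff_zero_eq_eval_zero]; simp [fdeltaShift]

theorem fdeltaShift_natDegree : fdeltaShift.natDegree = 16 := by
  unfold fdeltaShift; compute_degree!

theorem fdeltaShift_coeff_sixteen : fdeltaShift.coeff 16 = 9 := by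
  unfold fdeltaShift; compute_degree!

theorem fdeltaShift_root (z : ℂ) (hz : aeval z fdeltaShift = 0) : 1 < ‖z‖ := by
  by_contra! h
  have hk : ∀ (c : ℝ) (k : ℕ), 0 ≤ c → ‖(c : ℂ) * z ^ k‖ ≤ c := by
    intro c k hc
    rw [norm_mul, norm_pow, Complex.norm_real, Real.norm_of_nonneg hc]
    exact mul_le_of_le_one_right hc (pow_le_one₀ (norm_nonneg _) h)
  have hre : ∀ (c : ℝ) (k : ℕ), 0 ≤ c → |c * (z ^ k).re| ≤ c := by
    intro c k hc
    have h1 := Complex.abs_re_le_norm ((c : ℂ) * z ^ k)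
    rw [Complex.re_ofReal_mul] at h1
    exact h1.trans (hk c k hc)
  have hu : ∀ k : ℕ, (z ^ k).re ≤ 1 ∧ -1 ≤ (z ^ k).re := by
    intro k
    have := abs_le.1 (hre 1 k zero_le_one)
    rw [one_mul] at this
    exact ⟨this.2, this.1⟩
  have e := congrArg Complex.re hz
  have hm : ∀ (n : ℕ) [n.AtLeastTwo] (w : ℂ),
      ((OfNat.ofNat n : ℂ) * w).re = (OfNat.ofNat n : ℝ) * w.re := by
    intro n _ w
    exact Complex.re_ofReal_mul (OfNat.ofNat n : ℝ) w
  simp only [fdeltaShift, map_add, map_sub, map_mul, map_pow, aeval_X, map_ofNat,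
    Complex.add_re, Complex.sub_re, hm, Complex.zero_re, Complex.re_ofNat] at e
  have h1 := hu 1
  rw [pow_one] at h1
  linarith [h1.1, h1.2, hu 2, hu 3, (hu 4).1, (hu 4).2, (hu 5).1, (hu 5).2, (hu 6).1, (hu 6).2,
    (hu 7).1, (hu 7).2, (hu 8).1, (hu 8).2, (hu 9).1, (hu 9).2, (hu 10).1, (hu 10).2,
    (hu 11).1, (hu 11).2, (hu 12).1, (hu 12).2, (hu 13).1, (hu 13).2, (hu 14).1, (hu 14).2,
    (hu 15).1, (hu 15).2, (hu 16).1, (hu 16).2, (hu 2).1, (hu 2).2, (hu 3).1, (hu 3).2]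

theorem multiset_one_lt_prod_norm (s : Multiset ℂ) (hs : s ≠ 0) (h : ∀ z ∈ s, 1 < ‖z‖) :
    1 < ‖s.prod‖ := by
  induction s using Multiset.induction_on with
  | empty => exact absurd rfl hs
  | cons a s ih =>
    rw [Multiset.prod_cons, norm_mul]
    have ha := h a (Multiset.mem_cons_self a s)
    by_cases h0 : s = 0
    · subst h0; simpa using ha
    · have := ih h0 fun z hz => h z (Multiset.mem_cons_of_mem hz)
      nlinarith

theorem fdeltaShift_unit_of_dvd (g : ℤ[X]) (hg : g ∣ fdeltaShift) (h0 : IsUnit (g.coeff 0)) :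
    IsUnit g := by
  by_cases hd : g.natDegree = 0
  · rw [eq_C_of_natDegree_eq_zero hd]
    exact h0.map C
  exfalso
  have hinj : Function.Injective (Int.castRingHom ℂ) := Int.cast_injective
  have hs : (g.map (Int.castRingHom ℂ)).Splits := IsAlgClosed.splits _
  have hg0 : g ≠ 0 := by rintro rfl; simp at hd
  have hlt : 1 < ‖(g.map (Int.castRingHom ℂ)).roots.prod‖ := by
    apply multiset_one_lt_prod_norm
    · intro h
      have := hs.natDegree_eq_card_roots
      rw [h, natDegree_map_eq_of_injective hinj] at this
      exact hd (by simpa using this)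
    · intro z hz
      apply fdeltaShift_root
      obtain ⟨k, hk⟩ := hg
      have hr := (mem_roots'.1 hz).2
      rw [IsRoot.def, eval_map] at hr
      have hr' : aeval z g = 0 := hr
      rw [hk, map_mul, hr', zero_mul]
  have hc := congrArg norm hs.coeff_zero_eq_leadingCoeff_mul_prod_roots
  rw [norm_mul, norm_mul, norm_pow, norm_neg, norm_one, one_pow, one_mul, coeff_map,
    leadingCoeff_map_of_injective hinj, eq_intCast, eq_intCast, Complex.norm_intCast,
    Complex.norm_intCast] at hc
  have h1 : |((g.coeff 0 : ℤ) : ℝ)| = 1 := by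
    rw [← Int.cast_abs, Int.isUnit_iff_abs_eq.1 h0, Int.cast_one]
  have h2 : (1 : ℝ) ≤ |((g.leadingCoeff : ℤ) : ℝ)| := by
    rw [← Int.cast_abs]
    exact_mod_cast Int.one_le_abs (leadingCoeff_ne_zero.2 hg0)
  rw [h1] at hc
  nlinarith

theorem fdeltaShift_irreducible : Irreducible fdeltaShift := by
  have hp : Prime (1260804727177 : ℤ) := by
    exact_mod_cast Nat.prime_iff_prime_int.1 fdelta_prime_value
  refine ⟨fun hu => ?_, fun a b hab => ?_⟩
  · have := natDegree_eq_zero_of_isUnit hu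
    rw [fdeltaShift_natDegree] at this
    omega
  · have h : (1260804727177 : ℤ) = a.coeff 0 * b.coeff 0 := by
      rw [← mul_coeff_zero, ← hab, fdeltaShift_coeff_zero]
    rcases hp.irreducible.isUnit_or_isUnit h with h | h
    · exact Or.inl (fdeltaShift_unit_of_dvd a ⟨b, hab⟩ h)
    · exact Or.inr (fdeltaShift_unit_of_dvd b ⟨a, by rw [hab, mul_comm]⟩ h)

theorem fdeltaShift_isPrimitive : fdeltaShift.IsPrimitive :=
  fdeltaShift_irreducible.isPrimitive (by rw [fdeltaShift_natDegree]; norm_num)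

theorem fdeltaQ_eq_comp : C (4 ^ 16 : ℚ) * fdeltaQ =
    (fdeltaShift.map (Int.castRingHom ℚ)).comp (C 8 * X + C (-5)) := by
  simp only [fdeltaQ, fdeltaShift, Polynomial.map_add, Polynomial.map_sub, Polynomial.map_mul,
    Polynomial.map_pow, Polynomial.map_X, Polynomial.map_ofNat, add_comp, sub_comp, mul_comp,
    pow_comp, X_comp, ofNat_comp, C_neg, C_pow, C_ofNat]
  ring

theorem fdeltaQ_irreducible : Irreducible fdeltaQ := by
  have h1 : Irreducible (fdeltaShift.map (Int.castRingHom ℚ)) :=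
    (IsPrimitive.Int.irreducible_iff_irreducible_map_cast fdeltaShift_isPrimitive).1 fdeltaShift_irreducible
  letI : Invertible (8 : ℚ) := invertibleOfNonzero (by norm_num)
  have h2 := (MulEquiv.irreducible_iff (algEquivCMulXAddC (8 : ℚ) (-5))).2 h1
  have h3 : algEquivCMulXAddC (8 : ℚ) (-5) (fdeltaShift.map (Int.castRingHom ℚ)) =
      C (4 ^ 16 : ℚ) * fdeltaQ := by
    rw [fdeltaQ_eq_comp, algEquivCMulXAddC_apply, comp_eq_aeval]
  rw [h3] at h2
  have hu : IsUnit (C (4 ^ 16 : ℚ)) := by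
    rw [isUnit_C]; exact IsUnit.mk0 _ (by norm_num)
  exact (irreducible_isUnit_mul hu).1 h2

/-- The polynomial `f_δ`, regarded as a polynomial over ℚ, is irreducible of degree 16. -/
theorem fdelta_irreducible_degree_sixteen :
    Irreducible fdeltaQ ∧ fdeltaQ.natDegree = 16 := by
  refine ⟨fdeltaQ_irreducible, ?_⟩
  unfold fdeltaQ
  compute_degree!
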